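/- For every τ in the upper half-plane with J(τ) ≠ 0 and J(τ) ≠ 1 (so that J'(τ) ≠ 0), the logarithmic derivative of the Dedekind eta function satisfies 24 η'(τ)/η(τ) = 6 J''(τ)/J'(τ) − 4 J'(τ)/J(τ) − 3 J'(τ)/(J(τ) − 1). -/

import Mathlib

open Complex Filter Topology

noncomputable section

/-- The nome `q = e^{2πiτ}`. -/
def qq (τ : ℂ) : ℂ := Complex.exp (2 * Real.pi * Complex.I * τ)

/-- The Eisenstein series `E₄(τ) = 1 + 240 Σ_{n≥1} σ₃(n) qⁿ`. -/
def E4 (τ : ℂ) : ℂ := 1 + 240 * ∑' n : ℕ, (∑ d ∈ (n + 1).divisors, (d : ℂ) ^ 3) * qq τ ^ (n + 1)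

/-- The Eisenstein series `E₆(τ) = 1 − 504 Σ_{n≥1} σ₅(n) qⁿ`. -/
def E6 (τ : ℂ) : ℂ := 1 - 504 * ∑' n : ℕ, (∑ d ∈ (n + 1).divisors, (d : ℂ) ^ 5) * qq τ ^ (n + 1)

/-- The normalized elliptic modular function `J = E₄³ / (E₄³ − E₆²)`. -/
def J (τ : ℂ) : ℂ := E4 τ ^ 3 / (E4 τ ^ 3 - E6 τ ^ 2)

/-- The Dedekind eta function `η(τ) = e^{πiτ/12} ∏_{n≥1} (1 − qⁿ)`. -/
def dedekindEta (τ : ℂ) : ℂ := Complex.exp (Real.pi * Complex.I * τ / 12) * ∏' n : ℕ, (1 - qq τ ^ (n + 1))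

/-- The elliptic point `ρ = e^{2πi/3}`. -/
def rho : ℂ := Complex.exp (2 * Real.pi * Complex.I / 3)

/-!
Since `1728 η²⁴ = E₄³ - E₆²`, we have `J = E₄³ / (1728 η²⁴)` and `J - 1 = E₆² / (1728 η²⁴)`.
The Serre derivative of `E₄` is a level one form of weight `6`, hence a multiple of `E₆`; together
with `η' / η = (π i / 12) E₂` this gives `J' = -2 π i E₄² E₆ / (1728 η²⁴)`. Eliminating `E₄` and
`E₆` yields `J' ^ 6 = (2 π i) ^ 6 * 1728 * η ^ 24 * J ^ 4 * (J - 1) ^ 3` on the upper half-plane,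
whose logarithmic derivative is the claimed formula.
-/

section

open UpperHalfPlane hiding J I
open ModularForm MatrixGroups Derivative
open scoped Manifold Real

lemma tendsto_atImInfty_of_hasSum_qExpansion {h : ℝ} (hh : 0 < h) {f : ℍ → ℂ} {c : ℕ → ℂ}
    (hf : ∀ τ : ℍ, HasSum (fun m ↦ c m • Function.Periodic.qParam h τ ^ m) (f τ)) :
    Tendsto f atImInfty (𝓝 (c 0)) := by
  set q : ℍ → ℂ := fun τ ↦ Function.Periodic.qParam h τ
  have hq (τ : ℍ) : q τ ≠ 0 := Function.Periodic.qParam_ne_zero _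
  have hquot (τ : ℍ) : HasSum (fun m ↦ c (m + 1) • q τ ^ m) ((q τ)⁻¹ * (f τ - c 0)) := by
    convert! ((hasSum_nat_add_iff' 1).mpr (hf τ)).mul_left (q τ)⁻¹ using 1
    · ext m
      change c (m + 1) • q τ ^ m = (q τ)⁻¹ * (c (m + 1) • q τ ^ (m + 1))
      rw [mul_smul_comm, pow_succ', inv_mul_cancel_left₀ (hq τ)]
    · simp
  have hlim : Tendsto (fun τ ↦ (q τ)⁻¹ * (f τ - c 0) * q τ) atImInfty (𝓝 0) :=
    (isBoundedAtImInfty_of_hasSum_qExpansion hh hquot).mul_zeroAtFilter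
      (qParam_tendsto_atImInfty hh)
  have hsub (τ : ℍ) : (q τ)⁻¹ * (f τ - c 0) * q τ = f τ - c 0 := by
    rw [mul_right_comm, inv_mul_cancel₀ (hq τ), one_mul]
  simpa only [hsub, tendsto_sub_nhds_zero_iff] using hlim

lemma tendsto_E2_atImInfty : Tendsto EisensteinSeries.E2 atImInfty (𝓝 1) := by
  simpa using tendsto_atImInfty_of_hasSum_qExpansion one_pos (f := EisensteinSeries.E2)
    (c := fun m ↦ if m = 0 then 1 else -24 * ArithmeticFunction.sigma 1 m)
    fun τ ↦ by simpa [Function.Periodic.qParam] using EisensteinSeries.hasSum_qExpansion_E2 (z := τ)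

lemma tendsto_E_atImInfty {k : ℕ} (hk : 3 ≤ k) (hk' : Even k) :
    Tendsto (ModularForm.E hk) atImInfty (𝓝 1) := by
  rw [← EisensteinSeries.E_qExpansion_coeff_zero hk hk']
  exact tendsto_atImInfty_of_hasSum_qExpansion one_pos
    (ModularForm.hasSum_qExpansion (ModularForm.E hk) one_pos one_mem_strictPeriods_SL)

lemma norm_deriv_comp_ofComplex_le {f : ℍ → ℂ} (hf : MDiff f) {M A : ℝ} (hA : 0 < A)
    (hM : ∀ w : ℍ, A ≤ w.im → ‖f w‖ ≤ M) {z : ℍ} (hz : A < z.im) :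
    ‖deriv (f ∘ ofComplex) z‖ ≤ M / (z.im - A) := by
  have him {w : ℂ} (hw : w ∈ Metric.closedBall (z : ℂ) (z.im - A)) : A ≤ w.im := by
    have hwz := (Complex.abs_im_le_norm (w - z)).trans (mem_closedBall_iff_norm.mp hw)
    rw [Complex.sub_im, coe_im, abs_le] at hwz
    linarith
  refine Complex.norm_deriv_le_of_forall_mem_sphere_norm_le (sub_pos.mpr hz) ?_ fun w hw ↦ ?_
  · exact (UpperHalfPlane.mdifferentiable_iff.mp hf).diffContOnCl_ball
      fun w hw ↦ hA.trans_le (him hw)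
  · have hAw := him (Metric.sphere_subset_closedBall hw)
    rw [Function.comp_apply, ofComplex_apply_of_im_pos (hA.trans_le hAw)]
    exact hM _ hAw

lemma isZeroAtImInfty_normalizedDerivOfComplex {f : ℍ → ℂ} (hf : MDiff f)
    (hbd : IsBoundedAtImInfty f) : IsZeroAtImInfty (D f) := by
  obtain ⟨M, A, hM⟩ := isBoundedAtImInfty_iff.mp hbd
  have hM' (w : ℍ) (hw : max A 1 ≤ w.im) : ‖f w‖ ≤ M := hM w (le_of_max_le_left hw)
  have him : Tendsto (fun z : ℍ ↦ z.im - max A 1) atImInfty atTop :=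
    tendsto_atTop_add_const_right _ _ tendsto_comap
  have hderiv : Tendsto (fun z : ℍ ↦ deriv (f ∘ ofComplex) z) atImInfty (𝓝 0) := by
    refine squeeze_zero_norm' ?_ (him.const_div_atTop M)
    filter_upwards [him.eventually_gt_atTop 0] with z hz
    exact norm_deriv_comp_ofComplex_le hf (by positivity) hM' (sub_pos.mp hz)
  have hD := hderiv.const_mul (2 * π * I)⁻¹
  rwa [mul_zero] at hD

lemma isBoundedAtImInfty_serreDerivative (k : ℂ) {f : ℍ → ℂ} (hf : MDiff f)
    (hbd : IsBoundedAtImInfty f) : IsBoundedAtImInfty (serreDerivative k f) := by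
  have hD : IsBoundedAtImInfty (D f) :=
    (isZeroAtImInfty_normalizedDerivOfComplex hf hbd).isBoundedAtImInfty
  exact hD.sub (((const_boundedAtFilter _ (k * 12⁻¹)).mul
    EisensteinSeries.isBoundedAtImInfty_E2).mul hbd)

lemma tendsto_serreDerivative_atImInfty (k : ℂ) {f : ℍ → ℂ} (hf : MDiff f) {c : ℂ}
    (hc : Tendsto f atImInfty (𝓝 c)) :
    Tendsto (serreDerivative k f) atImInfty (𝓝 (-(k / 12 * c))) := by
  have hD : Tendsto (D f) atImInfty (𝓝 0) :=
    isZeroAtImInfty_normalizedDerivOfComplex hf (hc.isBigO_one ℝ)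
  simpa [div_eq_mul_inv] using hD.sub ((tendsto_E2_atImInfty.const_mul (k * 12⁻¹)).mul hc)

/-- The Serre derivative `D f - (k / 12) E₂ f` of a modular form `f` of weight `k`, as a modular
form of weight `k + 2`. The group has to lie in `SL(2, ℤ)`, where the quasimodularity of `E₂`
makes up for that of `D f`. -/
def serreDerivativeForm {Γ : Subgroup (GL (Fin 2) ℝ)} (hΓ : Γ ≤ 𝒮ℒ) {k : ℤ}
    (f : ModularForm Γ k) : ModularForm Γ (k + 2) where
  toFun := serreDerivative k f
  slash_action_eq' A hA := by
    obtain ⟨γ, rfl⟩ := hΓ hA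
    exact serreDerivative_slash_invariant f.holo' (f.slash_action_eq' _ hA)
  holo' := serreDerivative_mdifferentiable _ f.holo'
  bdd_at_cusps' {c} hc := by
    have hc' : IsCusp c 𝒮ℒ := hc.mono hΓ
    refine (OnePoint.isBoundedAt_iff_forall_SL2Z hc').mpr fun γ hγ ↦ ?_
    rw [serreDerivative_slash_equivariant (ModularFormClass.holo f)]
    exact isBoundedAtImInfty_serreDerivative k (f.holo'.slash k γ)
      ((OnePoint.isBoundedAt_iff_forall_SL2Z hc').mp (f.bdd_at_cusps' hc) γ hγ)

lemma serreDerivative_E₄ (z : ℍ) : serreDerivative 4 E₄ z = -(E₆ z) / 3 := by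
  obtain ⟨c, hc⟩ : ∃ c : ℂ, c • E₆ = serreDerivativeForm le_rfl E₄ :=
    (finrank_eq_one_iff_of_nonzero' E₆ (EisensteinSeries.E_ne_zero _ ⟨3, rfl⟩)).mp
      (Module.rank_eq_one_iff_finrank_eq_one.mp levelOne_weight_six_rank_one) _
  have hc_apply (w : ℍ) : c * E₆ w = serreDerivative 4 E₄ w := DFunLike.congr_fun hc w
  have hlim : Tendsto (serreDerivative 4 E₄) atImInfty (𝓝 (c * 1)) :=
    ((tendsto_E_atImInfty (by norm_num) ⟨3, rfl⟩).const_mul c).congr hc_apply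
  have hc_eq : c * 1 = -(4 / 12 * 1) := tendsto_nhds_unique hlim <|
    tendsto_serreDerivative_atImInfty 4 E₄.holo' (tendsto_E_atImInfty (by norm_num) ⟨2, rfl⟩)
  rw [← hc_apply]
  linear_combination E₆ z * hc_eq

lemma E_eq_one_sub_mul_tsum_qq {k : ℕ} (hk : 3 ≤ k) (hk' : Even k) (z : ℍ) :
    ModularForm.E hk z = 1 - 2 * k / bernoulli k *
      ∑' n : ℕ, (∑ d ∈ (n + 1).divisors, (d : ℂ) ^ (k - 1)) * qq z ^ (n + 1) := by
  rw [EisensteinSeries.q_expansion_bernoulli hk hk', ← tsum_pnat_eq_tsum_succ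
    (f := fun n ↦ (∑ d ∈ n.divisors, (d : ℂ) ^ (k - 1)) * qq z ^ n)]
  simp [ArithmeticFunction.sigma_apply, qq]

lemma E4_eq_E₄ (z : ℍ) : E4 z = E₄ z := by
  rw [E4, E₄, E_eq_one_sub_mul_tsum_qq _ ⟨2, rfl⟩, show bernoulli 4 = -1 / 30 by decide +kernel]
  norm_num

lemma E6_eq_E₆ (z : ℍ) : E6 z = E₆ z := by
  rw [E6, E₆, E_eq_one_sub_mul_tsum_qq _ ⟨3, rfl⟩, show bernoulli 6 = 1 / 42 by decide +kernel]
  norm_num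

lemma dedekindEta_eq_eta : dedekindEta = η := by
  ext z
  simp only [dedekindEta, ModularForm.eta, eta_q_eq_pow, qq, Function.Periodic.qParam]
  congr 2
  push_cast
  ring

lemma dedekindEta_ne_zero (z : ℍ) : dedekindEta z ≠ 0 :=
  dedekindEta_eq_eta ▸ eta_ne_zero z.im_pos

lemma E4_cube_sub_E6_sq (z : ℍ) : E4 z ^ 3 - E6 z ^ 2 = 1728 * dedekindEta z ^ 24 := by
  have hΔ : dedekindEta z ^ 24 = (E₄ z ^ 3 - E₆ z ^ 2) / 1728 :=
    dedekindEta_eq_eta ▸ discriminant_eq_E₄_cube_sub_E₆_sq z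
  rw [hΔ, E4_eq_E₄, E6_eq_E₆]
  ring

lemma eventuallyEq_nhds_of_forall_coe_eq {F G : ℂ → ℂ} (h : ∀ z : ℍ, F z = G z) (z : ℍ) :
    F =ᶠ[𝓝 (z : ℂ)] G :=
  eventually_of_mem (isOpen_upperHalfPlaneSet.mem_nhds z.im_pos) fun w hw ↦ h ⟨w, hw⟩

lemma hasDerivAt_of_forall_coe_eq {F : ℂ → ℂ} {f : ℍ → ℂ} (hf : MDiff f) (h : ∀ z : ℍ, F z = f z)
    (z : ℍ) : HasDerivAt F (2 * π * I * D f z) z := by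
  have heq : F =ᶠ[𝓝 (z : ℂ)] f ∘ ofComplex :=
    eventuallyEq_nhds_of_forall_coe_eq (fun w ↦ by simpa using h w) z
  rw [normalizedDerivOfComplex, mul_inv_cancel_left₀ two_pi_I_ne_zero]
  exact (mdifferentiableAt_iff.mp (hf z)).hasDerivAt.congr_of_eventuallyEq heq

lemma hasDerivAt_E4 (z : ℍ) : HasDerivAt E4
    (2 * π * I * ((EisensteinSeries.E2 z * E4 z - E6 z) / 3)) z := by
  convert! hasDerivAt_of_forall_coe_eq E₄.holo' E4_eq_E₄ z using 2
  have hE₄ := serreDerivative_E₄ z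
  rw [serreDerivative_apply, ← E4_eq_E₄, ← E6_eq_E₆] at hE₄
  linear_combination -hE₄

lemma hasDerivAt_dedekindEta (z : ℍ) : HasDerivAt dedekindEta
    (π * I / 12 * EisensteinSeries.E2 z * dedekindEta z) z := by
  rw [dedekindEta_eq_eta, ← logDeriv_eta_eq_E2, logDeriv_apply,
    div_mul_cancel₀ _ (eta_ne_zero z.im_pos)]
  exact (differentiableAt_eta_of_mem_upperHalfPlaneSet z.im_pos).hasDerivAt

lemma J_eq (z : ℍ) : J z = E4 z ^ 3 / (1728 * dedekindEta z ^ 24) := by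
  rw [J, E4_cube_sub_E6_sq]

lemma J_sub_one_eq (z : ℍ) : J z - 1 = E6 z ^ 2 / (1728 * dedekindEta z ^ 24) := by
  have hη := dedekindEta_ne_zero z
  rw [J_eq]
  field_simp
  linear_combination E4_cube_sub_E6_sq z

lemma hasDerivAt_J (z : ℍ) : HasDerivAt J
    (-(2 * π * I) * (E4 z ^ 2 * E6 z / (1728 * dedekindEta z ^ 24))) z := by
  have hη := dedekindEta_ne_zero z
  have heq : J =ᶠ[𝓝 (z : ℂ)] fun w ↦ E4 w ^ 3 / (1728 * dedekindEta w ^ 24) :=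
    eventuallyEq_nhds_of_forall_coe_eq J_eq z
  refine HasDerivAt.congr_of_eventuallyEq ?_ heq
  convert! ((hasDerivAt_E4 z).fun_pow 3).fun_div
    (((hasDerivAt_dedekindEta z).fun_pow 24).const_mul 1728)
    (mul_ne_zero (by norm_num) (pow_ne_zero 24 hη)) using 1
  field_simp
  push_cast
  ring

lemma differentiableAt_deriv_J (z : ℍ) : DifferentiableAt ℂ (deriv J) z := by
  have hJ : DifferentiableOn ℂ J upperHalfPlaneSet := fun w hw ↦
    (hasDerivAt_J ⟨w, hw⟩).differentiableAt.differentiableWithinAt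
  exact (hJ.deriv isOpen_upperHalfPlaneSet).differentiableAt
    (isOpen_upperHalfPlaneSet.mem_nhds z.im_pos)

lemma deriv_J_pow_six (z : ℍ) : deriv J z ^ 6 =
    (2 * π * I) ^ 6 * 1728 * (dedekindEta z ^ 24 * J z ^ 4 * (J z - 1) ^ 3) := by
  have hη := dedekindEta_ne_zero z
  rw [(hasDerivAt_J z).deriv, J_sub_one_eq, J_eq]
  field_simp

lemma deriv_J_ne_zero {z : ℍ} (h0 : J z ≠ 0) (h1 : J z ≠ 1) : deriv J z ≠ 0 := by
  have hprod : dedekindEta z ^ 24 * J z ^ 4 * (J z - 1) ^ 3 ≠ 0 :=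
    mul_ne_zero (mul_ne_zero (pow_ne_zero _ (dedekindEta_ne_zero z)) (pow_ne_zero _ h0))
      (pow_ne_zero _ (sub_ne_zero.mpr h1))
  refine ne_zero_pow (n := 6) (by norm_num) ?_
  rw [deriv_J_pow_six]
  exact mul_ne_zero (mul_ne_zero (pow_ne_zero 6 two_pi_I_ne_zero) (by norm_num)) hprod

lemma six_mul_logDeriv_deriv_J {z : ℍ} (h0 : J z ≠ 0) (h1 : J z ≠ 1) :
    6 * logDeriv (deriv J) z =
      24 * logDeriv dedekindEta z + 4 * logDeriv J z + 3 * logDeriv (fun w ↦ J w - 1) z := by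
  have hη := (hasDerivAt_dedekindEta z).differentiableAt
  have hJ := (hasDerivAt_J z).differentiableAt
  have hη0 := pow_ne_zero 24 (dedekindEta_ne_zero z)
  have hJ0 := pow_ne_zero 4 h0
  have hpow : (fun w ↦ deriv J w ^ 6) =ᶠ[𝓝 (z : ℂ)] fun w ↦
      (2 * π * I) ^ 6 * 1728 * (dedekindEta w ^ 24 * J w ^ 4 * (J w - 1) ^ 3) :=
    eventuallyEq_nhds_of_forall_coe_eq deriv_J_pow_six z
  have hlog := (logDeriv_congr_nhds hpow).eq_of_nhds
  rw [logDeriv_const_mul _ _ (mul_ne_zero (pow_ne_zero 6 two_pi_I_ne_zero) (by norm_num)),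
    logDeriv_mul (f := fun w ↦ dedekindEta w ^ 24 * J w ^ 4) (g := fun w ↦ (J w - 1) ^ 3) _
      (mul_ne_zero hη0 hJ0) (pow_ne_zero 3 (sub_ne_zero.mpr h1))
      ((hη.fun_pow 24).fun_mul (hJ.fun_pow 4)) ((hJ.sub_const 1).fun_pow 3),
    logDeriv_mul (f := fun w ↦ dedekindEta w ^ 24) (g := fun w ↦ J w ^ 4) _
      hη0 hJ0 (hη.fun_pow 24) (hJ.fun_pow 4),
    logDeriv_fun_pow (differentiableAt_deriv_J z), logDeriv_fun_pow hη, logDeriv_fun_pow hJ,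
    logDeriv_fun_pow (hJ.sub_const 1)] at hlog
  exact_mod_cast hlog

end

/-- For `τ ∈ ℍ` with `J(τ) ∉ {0,1}`, `J'(τ) ≠ 0` and
`24 η'/η = 6 J''/J' − 4 J'/J − 3 J'/(J−1)`. -/
theorem eta_log_deriv_formula (τ : ℂ) (hτ : 0 < τ.im) (h0 : J τ ≠ 0) (h1 : J τ ≠ 1) :
    deriv J τ ≠ 0 ∧
    24 * (deriv dedekindEta τ / dedekindEta τ) =
      6 * (iteratedDeriv 2 J τ / deriv J τ) - 4 * (deriv J τ / J τ) -
        3 * (deriv J τ / (J τ - 1)) := by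
  lift τ to UpperHalfPlane using hτ
  refine ⟨deriv_J_ne_zero h0 h1, ?_⟩
  have hlog := six_mul_logDeriv_deriv_J h0 h1
  simp only [logDeriv_apply, deriv_sub_const] at hlog
  rw [iteratedDeriv_succ, iteratedDeriv_one]
  linear_combination -hlog
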